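/- arXiv:2007.00593 — 3 statements merged into one kernel-verified Lean document; each statement's English description precedes it below -/
import Mathlib

section
/- Assume Q̂ is invertible and write Q̂⁻¹C = (H₁, …, H_{N−1}) ∈ ℝ^{N−1}. If H_i = 0 for some index i ∈ {1, …, N−1}, then every vector P ∈ ℝ^N with QP = 0 satisfies P_i = 0. -/
open Matrix

/-- Let `Q` be an `N × N` real matrix (`N = n + 1 ≥ 2`) with block
decomposition `Q = [[Q̂, C], [R, Q_NN]]`, where `Q̂` is obtained by deleting the last
row and column and `C` is the last column without its last entry.  If `Q̂` is
invertible and the `i`-th entry of `Q̂⁻¹ C` vanishes, then every `P` with `Q P = 0`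
has vanishing `i`-th entry. -/
theorem kernel_component_eq_zero_of_inv_mulVec_eq_zero
    (n : ℕ) (hn : 1 ≤ n) (Q : Matrix (Fin (n + 1)) (Fin (n + 1)) ℝ)
    (Qhat : Matrix (Fin n) (Fin n) ℝ) (C : Fin n → ℝ)
    (hQhat : ∀ i j : Fin n, Qhat i j = Q i.castSucc j.castSucc)
    (hC : ∀ i : Fin n, C i = Q i.castSucc (Fin.last n))
    (hinv : IsUnit Qhat)
    (i : Fin n) (hH : (Qhat⁻¹ *ᵥ C) i = 0) :
    ∀ P : Fin (n + 1) → ℝ, Q *ᵥ P = 0 → P i.castSucc = 0 := by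
  intro P hP
  -- The first `n` rows of `Q P = 0` read `Q̂ p + P_N C = 0`, with `p` the first `n` entries of `P`.
  have hrows : Qhat *ᵥ (fun j => P j.castSucc) = -(P (Fin.last n) • C) := by
    funext k
    have h := congrFun hP k.castSucc
    simp only [Matrix.mulVec, dotProduct, Fin.sum_univ_castSucc, Pi.zero_apply] at h
    simp only [Matrix.mulVec, dotProduct, Pi.neg_apply, Pi.smul_apply, smul_eq_mul, hQhat, hC]
    linarith
  have hdet : IsUnit Qhat.det := (Matrix.isUnit_iff_isUnit_det Qhat).mp hinv
  -- Multiplying by `Q̂⁻¹` gives `p = -P_N Q̂⁻¹ C`.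
  have h := congrFun (congrArg (Qhat⁻¹ *ᵥ ·) hrows) i
  simpa [Matrix.mulVec_mulVec, Matrix.nonsing_inv_mul _ hdet, Matrix.mulVec_neg,
    Matrix.mulVec_smul, hH] using h
end

section
/- For every integer n ≥ 4 there exists a nonconstant positive smooth function S : ℝⁿ → ℝ with the following properties: (1) Δ'S(x) ≤ 0 for all x ∈ ℝⁿ, Δ'S(x₀) < 0 for some x₀, and Δ'S is Lebesgue integrable on ℝⁿ; (2) there is a constant C > 0 such that S(x) = 1 whenever |xⁿ| ≥ C; (3) the limit as ρ → ∞ of ∫_{{x ∈ ℝⁿ : ‖x'‖ = ρ}} −⟨∇'S(x), x'/‖x'‖⟩ dH^{n−1}(x) exists and is positive, where H^{n−1} denotes (n−1)-dimensional Hausdorff measure on the cylinder {x ∈ ℝⁿ : ‖x'‖ = ρ}; (4) for every multi-index I there is a constant C_I such that |∂^I (S − 1)(x)| ≤ C_I (1 + ‖x‖)^{3−n} for all x ∈ ℝⁿ. -/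
/-!
Take `S(x) = 1 + φ(xⁿ) (1 + ‖x'‖²)^{-(m-2)/2}` with `m = n - 1` and `φ` a nonnegative bump
function on `ℝ`.

The profile in `x'` is the Aubin–Talenti bubble, whose Laplacian on `ℝ^m` is exactly
`-m(m-2) (1 + ‖x'‖²)^{-(m+2)/2}` (`lapPrime_sepFun`). This has the right sign, and with the
compactly supported factor `φ` it decays like `‖x‖^{-(m+2)}`, hence is integrable on `ℝ^{m+1}`.

For the derivative bounds, all derivatives of a power `(1 + ‖y‖²)^β` are bounded by a multiple of
that same power (`bound_weight`), the derivatives of `φ` are bounded by any negative power of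
`1 + t²`, and `(1 + t²)(1 + ‖y‖²) ≥ 1 + t² + ‖y‖²` turns the product of the two weights into a
weight in the full variable `x`.

On the cylinder `{‖x'‖ = ρ}` the flux density is `(m-2) ρ (1 + ρ²)^{-m/2} φ(xⁿ)`, so the flux
follows from the value of cylinder integrals of functions of `xⁿ` (`exists_cyl_integral`). The
push-forward of Hausdorff measure on the unit cylinder to the axis is translation invariant, and it
is finite and nonzero on `[-1, 1]`, so it is a positive multiple `c` of Lebesgue measure by
uniqueness of Haar measure; dilation by `ρ` then gives the factor `ρ^{m-1}`. The flux is
`(m-2) c (∫ φ) ρ^m (1 + ρ²)^{-m/2}`, which tends to `(m-2) c ∫ φ > 0`.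
-/


open scoped BigOperators MeasureTheory
open Filter

noncomputable section

/-- The `i`-th coordinate vector of `ℝ^{m+1}`. -/
def coordVec (m : ℕ) (i : Fin (m + 1)) : EuclideanSpace ℝ (Fin (m + 1)) :=
  EuclideanSpace.single i 1

/-- Partial derivative `∂f/∂xⁱ` at `x`. -/
def pdv (m : ℕ) (i : Fin (m + 1)) (f : EuclideanSpace ℝ (Fin (m + 1)) → ℝ)
    (x : EuclideanSpace ℝ (Fin (m + 1))) : ℝ :=
  fderiv ℝ f x (coordVec m i)

/-- `Δ'S`: the Euclidean Laplacian of `S` in the first `m` variables (of `m + 1`). -/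
def lapPrime (m : ℕ) (S : EuclideanSpace ℝ (Fin (m + 1)) → ℝ)
    (x : EuclideanSpace ℝ (Fin (m + 1))) : ℝ :=
  ∑ a : Fin m, pdv m a.castSucc (pdv m a.castSucc S) x

/-- The projection `x ↦ x'` onto the first `m` coordinates. -/
def projPrime (m : ℕ) (x : EuclideanSpace ℝ (Fin (m + 1))) : EuclideanSpace ℝ (Fin m) :=
  (WithLp.equiv 2 (Fin m → ℝ)).symm fun i => x i.castSucc

/-! ### Decay of derivatives -/

/-- Weight estimate: every derivative of `(1 + ‖x‖²)^β` is `O((1 + ‖x‖²)^β)`, for all real `β`.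
The induction on the order works for all `β` at once, because
`D(1 + ‖x‖²)^β = 2β (1 + ‖x‖²)^(β-1) ⟨x, ·⟩` and `‖x‖ ≤ 1 + ‖x‖²`. -/
lemma bound_weight {F : Type*} [NormedAddCommGroup F] [InnerProductSpace ℝ F] (k : ℕ) :
    ∀ β : ℝ, ∃ C : ℝ, 0 ≤ C ∧ ∀ x : F,
      ‖iteratedFDeriv ℝ k (fun y : F => (1 + ‖y‖ ^ 2) ^ β) x‖ ≤ C * (1 + ‖x‖ ^ 2) ^ β := by
  induction k using Nat.strong_induction_on with
  | _ k ih =>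
  intro β
  rcases k with _ | k
  · refine ⟨1, zero_le_one, fun x => ?_⟩
    rw [norm_iteratedFDeriv_zero, one_mul, Real.norm_of_nonneg (by positivity)]
  choose C hC0 hC using ih
  have hcd : ∀ γ : ℝ, ContDiff ℝ (⊤ : ℕ∞) (fun y : F => (1 + ‖y‖ ^ 2) ^ γ) := fun γ =>
    (contDiff_const.add (contDiff_norm_sq ℝ)).rpow_const_of_ne
      (fun x => by positivity)
  have hfd : fderiv ℝ (fun y : F => (1 + ‖y‖ ^ 2) ^ β)
      = fun y => ((1 + ‖y‖ ^ 2) ^ (β - 1)) • ((2 * β) • innerSL ℝ) y := by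
    funext y
    have h1 : HasFDerivAt (fun y : F => 1 + ‖y‖ ^ 2) (2 • innerSL ℝ y) y :=
      (hasStrictFDerivAt_norm_sq y).hasFDerivAt.const_add 1
    have h2 := h1.rpow_const (p := β) (Or.inl (by positivity))
    rw [h2.fderiv]
    ext z
    simp
    ring
  have hlin : ∀ j : ℕ, ∃ B : ℝ, 0 ≤ B ∧ ∀ x : F,
      ‖iteratedFDeriv ℝ j (((2 * β) • innerSL ℝ : F →L[ℝ] F →L[ℝ] ℝ)) x‖
        ≤ B * (1 + ‖x‖ ^ 2) := by
    intro j
    set L : F →L[ℝ] F →L[ℝ] ℝ := (2 * β) • innerSL ℝ with hL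
    have hx : ∀ x : F, ‖x‖ ≤ 1 + ‖x‖ ^ 2 := fun x => by nlinarith [sq_nonneg (‖x‖ - 1)]
    rcases j with _ | j
    · refine ⟨‖L‖, by positivity, fun x => ?_⟩
      rw [norm_iteratedFDeriv_zero]
      exact (L.le_opNorm x).trans (by gcongr; exact hx x)
    · refine ⟨‖L‖, by positivity, fun x => ?_⟩
      rw [← norm_iteratedFDeriv_fderiv]
      have : fderiv ℝ (L : F → F →L[ℝ] ℝ) = fun _ => L := by
        funext y; exact L.fderiv
      rw [this]
      have h1 : ‖L‖ ≤ ‖L‖ * (1 + ‖x‖ ^ 2) :=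
        le_mul_of_one_le_right (by positivity) (by nlinarith [sq_nonneg ‖x‖])
      rcases Nat.eq_zero_or_pos j with rfl | hj
      · rw [norm_iteratedFDeriv_zero]; exact h1
      · rw [iteratedFDeriv_const_of_ne hj.ne']
        simp only [Pi.zero_apply, norm_zero]; positivity
  choose B hB0 hB using hlin
  refine ⟨∑ i ∈ (Finset.range (k + 1)).attach, (k.choose i : ℝ)
      * C i (Finset.mem_range.1 i.2) (β - 1) * B (k - i), ?_, fun x => ?_⟩
  · refine Finset.sum_nonneg fun i _ => ?_
    have := hC0 i (Finset.mem_range.1 i.2) (β - 1)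
    have := hB0 (k - i)
    positivity
  rw [← norm_iteratedFDeriv_fderiv, hfd]
  refine (norm_iteratedFDeriv_smul_le (hcd (β - 1)) (((2 * β) • innerSL ℝ :
    F →L[ℝ] F →L[ℝ] ℝ)).contDiff x (n := k) (by exact_mod_cast le_top)).trans ?_
  rw [← Finset.sum_attach, Finset.sum_mul]
  refine Finset.sum_le_sum fun i _ => ?_
  have e : (1 + ‖x‖ ^ 2) ^ β = (1 + ‖x‖ ^ 2) ^ (β - 1) * (1 + ‖x‖ ^ 2) := by
    rw [← Real.rpow_add_one (by positivity)]; congr 1; ring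
  have h1 := hC i (Finset.mem_range.1 i.2) (β - 1) x
  have h2 := hB (k - i) x
  have h0 := hC0 i (Finset.mem_range.1 i.2) (β - 1)
  calc _ ≤ (k.choose i : ℝ) * (C i (Finset.mem_range.1 i.2) (β - 1) * (1 + ‖x‖ ^ 2) ^ (β - 1))
        * (B (k - i) * (1 + ‖x‖ ^ 2)) := by gcongr
    _ = _ := by rw [e]; ring

lemma bound_bump {φ : ℝ → ℝ} (hφ : ContDiff ℝ (⊤ : ℕ∞) φ) (hs : HasCompactSupport φ)
    (k : ℕ) (β : ℝ) :
    ∃ C : ℝ, 0 ≤ C ∧ ∀ t : ℝ, ‖iteratedFDeriv ℝ k φ t‖ ≤ C * (1 + t ^ 2) ^ β := by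
  have hc : Continuous (fun t : ℝ => (1 + t ^ 2) ^ (-β) * ‖iteratedFDeriv ℝ k φ t‖) := by
    refine Continuous.mul ?_ (hφ.continuous_iteratedFDeriv (by exact_mod_cast le_top)).norm
    exact (by fun_prop : Continuous fun t : ℝ => 1 + t ^ 2).rpow_const
      fun t => Or.inl (by positivity)
  obtain ⟨C, hC⟩ := ((hs.iteratedFDeriv (𝕜 := ℝ) k).norm.mul_left
    (f := fun t : ℝ => (1 + t ^ 2) ^ (-β))).exists_bound_of_continuous hc
  refine ⟨C, (norm_nonneg _).trans (hC 0), fun t => ?_⟩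
  have h := hC t
  have hp : 0 < (1 + t ^ 2) ^ β := by positivity
  rw [Pi.mul_apply, Real.norm_of_nonneg (by positivity), Real.rpow_neg (by positivity)] at h
  rwa [inv_mul_le_iff₀ hp, mul_comm] at h

/-- The projection `x ↦ x'` as a continuous linear map. -/
def projL (m : ℕ) : EuclideanSpace ℝ (Fin (m + 1)) →L[ℝ] EuclideanSpace ℝ (Fin m) :=
  LinearMap.toContinuousLinearMap
    { toFun := projPrime m
      map_add' := fun x y => by ext i; simp [projPrime]
      map_smul' := fun c x => by ext i; simp [projPrime] }

lemma projL_apply (m : ℕ) (x) : projL m x = projPrime m x := rfl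

@[simp] lemma projPrime_apply (m : ℕ) (x : EuclideanSpace ℝ (Fin (m + 1))) (a : Fin m) :
    projPrime m x a = x a.castSucc := rfl

lemma norm_projPrime_sq (m : ℕ) (x : EuclideanSpace ℝ (Fin (m + 1))) :
    ‖projPrime m x‖ ^ 2 = ∑ a : Fin m, x a.castSucc ^ 2 := by
  simp [EuclideanSpace.norm_sq_eq]

lemma norm_sq_split (m : ℕ) (x : EuclideanSpace ℝ (Fin (m + 1))) :
    ‖x‖ ^ 2 = ‖projPrime m x‖ ^ 2 + x (Fin.last m) ^ 2 := by
  rw [norm_projPrime_sq, EuclideanSpace.norm_sq_eq, Fin.sum_univ_castSucc]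
  simp

/-- The separated function `φ(xⁿ) (1 + ‖x'‖²)^β`. -/
def sepFun (m : ℕ) (φ : ℝ → ℝ) (β : ℝ) (x : EuclideanSpace ℝ (Fin (m + 1))) : ℝ :=
  φ (x (Fin.last m)) * (1 + ‖projPrime m x‖ ^ 2) ^ β

lemma contDiff_weight (m : ℕ) (γ : ℝ) : ContDiff ℝ (⊤ : ℕ∞)
    (fun y : EuclideanSpace ℝ (Fin m) => (1 + ‖y‖ ^ 2) ^ γ) :=
  (contDiff_const.add (contDiff_norm_sq ℝ)).rpow_const_of_ne (fun x => by positivity)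

lemma contDiff_sepFun (m : ℕ) {φ : ℝ → ℝ} (hφ : ContDiff ℝ (⊤ : ℕ∞) φ) (β : ℝ) :
    ContDiff ℝ (⊤ : ℕ∞) (sepFun m φ β) :=
  (hφ.comp (EuclideanSpace.proj (Fin.last m) :
      EuclideanSpace ℝ (Fin (m + 1)) →L[ℝ] ℝ).contDiff).mul
    ((contDiff_weight m β).comp (projL m).contDiff)

/-- The weights in `x'` and in `xⁿ` combine into the weight in `x`. -/
lemma weight_mul_le (m : ℕ) {s : ℝ} (hs : 0 ≤ s) (x : EuclideanSpace ℝ (Fin (m + 1))) :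
    (1 + x (Fin.last m) ^ 2) ^ (-s) * (1 + ‖projPrime m x‖ ^ 2) ^ (-s)
      ≤ (1 + ‖x‖ ^ 2) ^ (-s) := by
  rw [← Real.mul_rpow (by positivity) (by positivity)]
  refine Real.rpow_le_rpow_of_nonpos (by positivity) ?_ (by linarith)
  rw [norm_sq_split]
  nlinarith [mul_nonneg (sq_nonneg (x (Fin.last m))) (sq_nonneg ‖projPrime m x‖)]

lemma bound_comp {G F : Type*} [NormedAddCommGroup G] [NormedSpace ℝ G] [NormedAddCommGroup F]
    [NormedSpace ℝ F] (g : G →L[ℝ] F) {f : F → ℝ} (hf : ContDiff ℝ (⊤ : ℕ∞) f) (k : ℕ) (x : G) :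
    ‖iteratedFDeriv ℝ k (f ∘ g) x‖ ≤ ‖g‖ ^ k * ‖iteratedFDeriv ℝ k f (g x)‖ := by
  rw [g.iteratedFDeriv_comp_right hf x (by exact_mod_cast le_top)]
  refine (ContinuousMultilinearMap.norm_compContinuousLinearMap_le _ _).trans ?_
  simp [mul_comm]

lemma bound_sepFun (m : ℕ) {φ : ℝ → ℝ} (hφ : ContDiff ℝ (⊤ : ℕ∞) φ) (hs : HasCompactSupport φ)
    {s : ℝ} (hs0 : 0 ≤ s) (k : ℕ) :
    ∃ C : ℝ, 0 ≤ C ∧ ∀ x, ‖iteratedFDeriv ℝ k (sepFun m φ (-s)) x‖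
      ≤ C * (1 + ‖x‖ ^ 2) ^ (-s) := by
  choose A hA0 hA using fun j => bound_bump hφ hs j (-s)
  choose B hB0 hB using fun j => bound_weight (F := EuclideanSpace ℝ (Fin m)) j (-s)
  set ℓ := (EuclideanSpace.proj (Fin.last m) :
      EuclideanSpace ℝ (Fin (m + 1)) →L[ℝ] ℝ) with hℓ
  refine ⟨∑ i ∈ Finset.range (k + 1), (k.choose i : ℝ) * (‖ℓ‖ ^ i * A i)
    * (‖projL m‖ ^ (k - i) * B (k - i)), ?_, fun x => ?_⟩
  · refine Finset.sum_nonneg fun i _ => ?_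
    have := hA0 i
    have := hB0 (k - i)
    positivity
  refine (norm_iteratedFDeriv_mul_le (N := (⊤ : ℕ∞)) (hφ.comp ℓ.contDiff)
    ((contDiff_weight m (-s)).comp (projL m).contDiff) x (n := k)
    (by exact_mod_cast le_top)).trans ?_
  rw [Finset.sum_mul]
  refine Finset.sum_le_sum fun i _ => ?_
  have h1 : ‖iteratedFDeriv ℝ i (φ ∘ ℓ) x‖
      ≤ ‖ℓ‖ ^ i * (A i * (1 + x (Fin.last m) ^ 2) ^ (-s)) :=
    (bound_comp ℓ hφ i x).trans (by gcongr; exact hA i _)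
  have h2 : ‖iteratedFDeriv ℝ (k - i)
      ((fun y : EuclideanSpace ℝ (Fin m) => (1 + ‖y‖ ^ 2) ^ (-s)) ∘ projL m) x‖
      ≤ ‖projL m‖ ^ (k - i) * (B (k - i) * (1 + ‖projPrime m x‖ ^ 2) ^ (-s)) :=
    (bound_comp (projL m) (contDiff_weight m (-s)) (k - i) x).trans (by gcongr; exact hB _ _)
  have hA' := hA0 i
  have hB' := hB0 (k - i)
  calc _ ≤ (k.choose i : ℝ) * (‖ℓ‖ ^ i * (A i * (1 + x (Fin.last m) ^ 2) ^ (-s)))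
        * (‖projL m‖ ^ (k - i) * (B (k - i) * (1 + ‖projPrime m x‖ ^ 2) ^ (-s))) := by
        gcongr
    _ = (k.choose i : ℝ) * (‖ℓ‖ ^ i * A i) * (‖projL m‖ ^ (k - i) * B (k - i))
        * ((1 + x (Fin.last m) ^ 2) ^ (-s) * (1 + ‖projPrime m x‖ ^ 2) ^ (-s)) := by ring
    _ ≤ _ := by gcongr; exact weight_mul_le m hs0 x

/-- A nonnegative bump function on `ℝ` supported in `[-2, 2]`. -/
lemma exists_bump : ∃ φ : ℝ → ℝ, ContDiff ℝ (⊤ : ℕ∞) φ ∧ HasCompactSupport φ ∧ (∀ t, 0 ≤ φ t) ∧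
    φ 0 = 1 ∧ (∀ t, 2 ≤ |t| → φ t = 0) ∧ 0 < ∫ t, φ t := by
  let f : ContDiffBump (0 : ℝ) := ⟨1, 2, one_pos, one_lt_two⟩
  refine ⟨f, f.contDiff, f.hasCompactSupport, fun t => f.nonneg, ?_, fun t ht => ?_, f.integral_pos⟩
  · exact f.one_of_mem_closedBall (by simp [f])
  · exact f.zero_of_le_dist (by simpa [f] using ht)

/-! ### The partial Laplacian -/

/-- The first derivative of a separated function in a direction `xᵃ`, `a < n`. -/
lemma pdv_sepFun (m : ℕ) {φ : ℝ → ℝ} (hφ : ContDiff ℝ (⊤ : ℕ∞) φ) (β : ℝ) (a : Fin m)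
    (x : EuclideanSpace ℝ (Fin (m + 1))) :
    pdv m a.castSucc (sepFun m φ β) x = 2 * β * x a.castSucc * sepFun m φ (β - 1) x := by
  have hP : HasFDerivAt (projPrime m) (projL m) x := (projL m).hasFDerivAt
  have h1 : HasFDerivAt (fun y => 1 + ‖projPrime m y‖ ^ 2) _ x :=
    ((hasStrictFDerivAt_norm_sq (projPrime m x)).hasFDerivAt.comp x hP).const_add 1
  have h2 := h1.rpow_const (p := β) (Or.inl (by positivity))
  have h3 : HasFDerivAt (fun y : EuclideanSpace ℝ (Fin (m + 1)) => φ (y (Fin.last m))) _ x :=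
    ((hφ.differentiable (by simp)) _).hasFDerivAt.comp x
      (EuclideanSpace.proj (Fin.last m) :
      EuclideanSpace ℝ (Fin (m + 1)) →L[ℝ] ℝ).hasFDerivAt
  have h4 : HasFDerivAt (sepFun m φ β) _ x := h3.mul h2
  rw [pdv, h4.fderiv]
  have e1 : (coordVec m a.castSucc) (Fin.last m) = 0 := by
    simp [coordVec, (Fin.castSucc_lt_last a).ne']
  have e2 : projPrime m (coordVec m a.castSucc) = EuclideanSpace.single a 1 := by
    ext i
    simp [coordVec]
  simp [e1, e2, projL_apply, sepFun, EuclideanSpace.inner_single_right]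
  ring

lemma pdv_pdv_sepFun (m : ℕ) {φ : ℝ → ℝ} (hφ : ContDiff ℝ (⊤ : ℕ∞) φ) (β : ℝ) (a : Fin m)
    (x : EuclideanSpace ℝ (Fin (m + 1))) :
    pdv m a.castSucc (pdv m a.castSucc (sepFun m φ β)) x
      = 2 * β * sepFun m φ (β - 1) x
        + 4 * β * (β - 1) * x a.castSucc ^ 2 * sepFun m φ (β - 1 - 1) x := by
  have e : pdv m a.castSucc (sepFun m φ β)
      = fun x => (2 * β * x a.castSucc) * sepFun m φ (β - 1) x :=
    funext fun y => pdv_sepFun m hφ β a y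
  have h1 := ((contDiff_sepFun m hφ (β - 1)).differentiable (by simp) x).hasFDerivAt
  have h2 : HasFDerivAt (fun x : EuclideanSpace ℝ (Fin (m + 1)) => 2 * β * x a.castSucc) _ x :=
    (EuclideanSpace.proj a.castSucc :
      EuclideanSpace ℝ (Fin (m + 1)) →L[ℝ] ℝ).hasFDerivAt.const_mul (2 * β)
  have h3 : HasFDerivAt (fun x : EuclideanSpace ℝ (Fin (m + 1)) =>
      (2 * β * x a.castSucc) * sepFun m φ (β - 1) x) _ x := h2.mul h1
  rw [e, pdv, h3.fderiv]
  have h4 := pdv_sepFun m hφ (β - 1) a x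
  rw [pdv] at h4
  simp only [add_apply, smul_apply, h4, smul_eq_mul]
  simp [coordVec]
  ring

/-- With the exponent `β = (2 - m)/2` the two terms of the Laplacian combine into a negative
multiple of `(1 + ‖x'‖²)^{-(m+2)/2}`. -/
lemma lapPrime_sepFun (m : ℕ) {φ : ℝ → ℝ} (hφ : ContDiff ℝ (⊤ : ℕ∞) φ)
    (x : EuclideanSpace ℝ (Fin (m + 1))) :
    lapPrime m (sepFun m φ (-((m - 2) / 2))) x
      = -(m * (m - 2)) * sepFun m φ (-((m + 2) / 2)) x := by
  have e1 : (-(((m : ℝ) - 2) / 2) - 1) = -((m + 2) / 2) + 1 := by ring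
  have e2 : (-(((m : ℝ) - 2) / 2) - 1 - 1) = -((m + 2) / 2) := by ring
  have e3 : sepFun m φ (-(((m : ℝ) - 2) / 2) - 1) x
      = (1 + ‖projPrime m x‖ ^ 2) * sepFun m φ (-(((m : ℝ) + 2) / 2)) x := by
    rw [e1, sepFun, sepFun, Real.rpow_add_one (by positivity)]; ring
  simp only [lapPrime, pdv_pdv_sepFun m hφ]
  rw [Finset.sum_add_distrib, ← Finset.sum_mul (f := fun a : Fin m => _ * x a.castSucc ^ 2),
    ← Finset.mul_sum (f := fun a : Fin m => x a.castSucc ^ 2), ← norm_projPrime_sq, e3, e2]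
  simp
  ring

/-! ### Hausdorff measure on cylinders -/

/-- The image under `x ↦ xⁿ` of the `(n-1)`-dimensional Hausdorff measure on the cylinder
`{‖x'‖ = ρ}`, where `n = m + 1`. -/
def axisMeasure (m : ℕ) (ρ : ℝ) : MeasureTheory.Measure ℝ :=
  (MeasureTheory.Measure.restrict (μH[(m : ℝ)])
    {x : EuclideanSpace ℝ (Fin (m + 1)) | ‖projPrime m x‖ = ρ}).map (fun x => x (Fin.last m))

lemma continuous_projPrime (m : ℕ) : Continuous (projPrime m) := (projL m).continuous

lemma measurable_last (m : ℕ) :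
    Measurable (fun x : EuclideanSpace ℝ (Fin (m + 1)) => x (Fin.last m)) := by
  fun_prop

lemma measurableSet_cyl (m : ℕ) (ρ : ℝ) :
    MeasurableSet {x : EuclideanSpace ℝ (Fin (m + 1)) | ‖projPrime m x‖ = ρ} :=
  (isClosed_eq (continuous_projPrime m).norm continuous_const).measurableSet

lemma axisMeasure_apply (m : ℕ) (ρ : ℝ) {A : Set ℝ} (hA : MeasurableSet A) :
    axisMeasure m ρ A = μH[(m : ℝ)] {x : EuclideanSpace ℝ (Fin (m + 1)) |
      x (Fin.last m) ∈ A ∧ ‖projPrime m x‖ = ρ} := by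
  rw [axisMeasure, MeasureTheory.Measure.map_apply (measurable_last m) hA,
    MeasureTheory.Measure.restrict_apply (measurable_last m hA)]
  rfl

/-- The point with given `x'` and `xⁿ`. -/
def mkPt (m : ℕ) (v : Fin m → ℝ) (t : ℝ) : EuclideanSpace ℝ (Fin (m + 1)) :=
  WithLp.toLp 2 (Fin.snoc (α := fun _ => ℝ) v t)

@[simp] lemma mkPt_last (m : ℕ) (v : Fin m → ℝ) (t : ℝ) : mkPt m v t (Fin.last m) = t := by
  simp [mkPt]

@[simp] lemma mkPt_castSucc (m : ℕ) (v : Fin m → ℝ) (t : ℝ) (a : Fin m) :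
    mkPt m v t a.castSucc = v a := by
  simp [mkPt]

lemma projPrime_mkPt (m : ℕ) (v : Fin m → ℝ) (t : ℝ) :
    projPrime m (mkPt m v t) = WithLp.toLp 2 v := by
  ext i; simp

lemma hausdorff_fin (m : ℕ) : (μH[(m : ℝ)] : MeasureTheory.Measure (Fin m → ℝ))
    = MeasureTheory.volume := by
  rw [← MeasureTheory.hausdorffMeasure_pi_real, Fintype.card_fin]

instance axisMeasure_invariant (m : ℕ) (ρ : ℝ) : (axisMeasure m ρ).IsAddLeftInvariant := by
  refine ⟨fun t => ?_⟩
  ext A hA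
  rw [MeasureTheory.Measure.map_apply (by fun_prop) hA, axisMeasure_apply m ρ hA,
    axisMeasure_apply m ρ ((measurable_const_add t) hA),
    ← (IsometryEquiv.addLeft (mkPt m 0 t)).hausdorffMeasure_preimage (m : ℝ)
      {x | x (Fin.last m) ∈ A ∧ ‖projPrime m x‖ = ρ}]
  congr 1
  ext x
  have h : projPrime m (mkPt m 0 t + x) = projPrime m x := by
    ext i; simp
  simp [h]

/-- The chart of the cylinder `{‖x'‖ = 1}` obtained by radially projecting the cube face
`{xⁱ = s}`; the unused coordinate `yⁱ` parametrizes the axis. -/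
def faceMap (m : ℕ) (i : Fin m) (s : ℝ) (y : Fin m → ℝ) : EuclideanSpace ℝ (Fin (m + 1)) :=
  mkPt m (fun j => Function.update y i s j
    / ‖(WithLp.toLp 2 (Function.update y i s) : EuclideanSpace ℝ (Fin m))‖) (y i)

lemma contDiff_faceMap (m : ℕ) (i : Fin m) {s : ℝ} (hs : s ≠ 0) :
    ContDiff ℝ 1 (faceMap m i s) := by
  have h1 : ∀ j, ContDiff ℝ 1 (fun y : Fin m → ℝ => Function.update y i s j) := by
    intro j
    by_cases hj : j = i
    · subst hj; simpa using contDiff_const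
    · simpa [Function.update_of_ne hj] using contDiff_apply ℝ ℝ j
  have h2 : ContDiff ℝ 1 (fun y : Fin m → ℝ =>
      (WithLp.toLp 2 (Function.update y i s) : EuclideanSpace ℝ (Fin m))) :=
    contDiff_euclidean.2 h1
  have h3 : ∀ y : Fin m → ℝ,
      (WithLp.toLp 2 (Function.update y i s) : EuclideanSpace ℝ (Fin m)) ≠ 0 := by
    intro y h
    have := congrArg (fun v : EuclideanSpace ℝ (Fin m) => v i) h
    simp [hs] at this
  refine contDiff_euclidean.2 fun j => ?_
  refine Fin.lastCases ?_ (fun a => ?_) j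
  · simpa [faceMap] using contDiff_apply ℝ ℝ i
  · simp only [faceMap, mkPt_castSucc]
    exact (h1 a).div (h2.norm ℝ h3) fun y => norm_ne_zero_iff.2 (h3 y)

/-- A bounded piece of the cylinder is covered by Lipschitz images of the `2m` faces of a cube,
so it has finite measure. -/
lemma axisMeasure_Icc_lt_top (m : ℕ) (hm : 0 < m) : axisMeasure m 1 (Set.Icc (-1) 1) < ⊤ := by
  rw [axisMeasure_apply m 1 measurableSet_Icc]
  let Q : Set (Fin m → ℝ) := Set.Icc (fun _ => -1) (fun _ => 1)
  have hfin : ∀ (i : Fin m) (s : ℝ), s ≠ 0 → μH[(m : ℝ)] (faceMap m i s '' Q) < ⊤ := by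
    intro i s hs
    obtain ⟨K, hK⟩ := (contDiff_faceMap m i hs).contDiffOn.exists_lipschitzOnWith
      one_ne_zero (convex_Icc _ _ : Convex ℝ Q) isCompact_Icc
    refine (hK.hausdorffMeasure_image_le (Nat.cast_nonneg m)).trans_lt ?_
    rw [hausdorff_fin]
    exact ENNReal.mul_lt_top (by simp) isCompact_Icc.measure_lt_top
  have hcov : {x : EuclideanSpace ℝ (Fin (m + 1)) |
      x (Fin.last m) ∈ Set.Icc (-1 : ℝ) 1 ∧ ‖projPrime m x‖ = 1}
      ⊆ ⋃ i : Fin m, (faceMap m i 1 '' Q ∪ faceMap m i (-1) '' Q) := by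
    rintro x ⟨hx, hx1⟩
    have : Nonempty (Fin m) := ⟨⟨0, hm⟩⟩
    obtain ⟨i, hi⟩ := Finite.exists_max fun a : Fin m => |x a.castSucc|
    have hpos : 0 < |x i.castSucc| := by
      by_contra h
      have h0 : ∀ a : Fin m, x a.castSucc = 0 := fun a =>
        abs_eq_zero.1 (le_antisymm ((hi a).trans (not_lt.1 h)) (abs_nonneg _))
      have := norm_projPrime_sq m x
      simp [h0, hx1] at this
    set r := |x i.castSucc| with hr
    -- dividing by the largest coordinate moves `x'` to the boundary of the cube
    let y : Fin m → ℝ := fun j => if j = i then x (Fin.last m) else x j.castSucc / r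
    have hyQ : y ∈ Q := by
      have : ∀ j, |y j| ≤ 1 := by
        intro j
        by_cases hj : j = i
        · simpa [y, hj] using abs_le.2 hx
        · simp only [y, hj, if_false, abs_div, hr, abs_abs]
          exact (div_le_one hpos).2 (hi j)
      exact ⟨fun j => (abs_le.1 (this j)).1, fun j => (abs_le.1 (this j)).2⟩
    have key : ∀ s : ℝ, s = x i.castSucc / r → faceMap m i s y = x := by
      intro s hs
      have hu : Function.update y i s = fun j => r⁻¹ * x j.castSucc := by
        ext j
        by_cases hj : j = i
        · subst hj; simp [hs, div_eq_inv_mul]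
        · simp [hj, y, div_eq_inv_mul]
      have hn : ‖(WithLp.toLp 2 (Function.update y i s) : EuclideanSpace ℝ (Fin m))‖ = r⁻¹ := by
        have : (WithLp.toLp 2 (Function.update y i s) : EuclideanSpace ℝ (Fin m))
            = r⁻¹ • projPrime m x := by
          ext j; simp [hu]
        rw [this, norm_smul, hx1, mul_one, Real.norm_of_nonneg (by positivity)]
      ext j
      refine Fin.lastCases ?_ (fun a => ?_) j
      · simp [faceMap, y]
      · simp only [faceMap, mkPt_castSucc]
        rw [hn, hu]
        field_simp
    refine Set.mem_iUnion.2 ⟨i, ?_⟩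
    rcases abs_choice (x i.castSucc) with h | h
    · refine Or.inl ⟨y, hyQ, key 1 ?_⟩
      rw [hr, h, div_self]
      intro h0; simp [hr, h0] at hpos
    · refine Or.inr ⟨y, hyQ, key (-1) ?_⟩
      rw [hr, h, div_neg, div_self]
      intro h0; simp [hr, h0] at hpos
  refine (MeasureTheory.measure_mono hcov).trans_lt ?_
  refine (MeasureTheory.measure_iUnion_le _).trans_lt ?_
  rw [tsum_fintype]
  refine ENNReal.sum_lt_top.2 fun i _ => ?_
  exact (MeasureTheory.measure_union_le _ _).trans_lt
    (ENNReal.add_lt_top.2 ⟨hfin i 1 one_ne_zero, hfin i (-1) (by norm_num)⟩)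

/-- Replacing the first coordinate by the axial one maps a piece of the cylinder linearly onto a
set with nonempty interior in `ℝ^m`, so that piece has positive measure. -/
lemma axisMeasure_Icc_pos (m : ℕ) (hm : 0 < m) : axisMeasure m 1 (Set.Icc (-1) 1) ≠ 0 := by
  rw [axisMeasure_apply m 1 measurableSet_Icc]
  intro h0
  let i : Fin m := ⟨0, hm⟩
  let q : Fin m → Fin (m + 1) := fun j => if j = i then Fin.last m else j.castSucc
  let Q : EuclideanSpace ℝ (Fin (m + 1)) →L[ℝ] (Fin m → ℝ) :=
    ContinuousLinearMap.pi fun j => EuclideanSpace.proj (q j)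
  have hQ := Q.lipschitz.hausdorffMeasure_image_le (Nat.cast_nonneg m)
    {x : EuclideanSpace ℝ (Fin (m + 1)) |
      x (Fin.last m) ∈ Set.Icc (-1 : ℝ) 1 ∧ ‖projPrime m x‖ = 1}
  rw [h0, mul_zero, hausdorff_fin, nonpos_iff_eq_zero] at hQ
  have hm' : (1 : ℝ) ≤ m := by exact_mod_cast hm
  have hsub : Metric.ball (0 : Fin m → ℝ) ((m : ℝ)⁻¹) ⊆ Q '' {x : EuclideanSpace ℝ (Fin (m + 1)) |
      x (Fin.last m) ∈ Set.Icc (-1 : ℝ) 1 ∧ ‖projPrime m x‖ = 1} := by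
    intro y hy
    have hy' : ‖y‖ < (m : ℝ)⁻¹ := by simpa using hy
    have hyj : ∀ j, |y j| ≤ (m : ℝ)⁻¹ := fun j => (norm_le_pi_norm y j).trans hy'.le
    have hinv : (m : ℝ)⁻¹ ≤ 1 := inv_le_one_of_one_le₀ hm'
    have hsum : ∑ j ∈ Finset.univ.erase i, y j ^ 2 ≤ 1 := by
      calc ∑ j ∈ Finset.univ.erase i, y j ^ 2 ≤ ∑ j : Fin m, y j ^ 2 :=
            Finset.sum_le_sum_of_subset_of_nonneg (Finset.subset_univ _)
              fun j _ _ => sq_nonneg _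
        _ ≤ ∑ _j : Fin m, (m : ℝ)⁻¹ := by
            refine Finset.sum_le_sum fun j _ => ?_
            rw [← sq_abs]
            nlinarith [hyj j, abs_nonneg (y j)]
        _ = 1 := by simp; field_simp
    let s := √(1 - ∑ j ∈ Finset.univ.erase i, y j ^ 2)
    refine ⟨mkPt m (Function.update y i s) (y i), ⟨?_, ?_⟩, ?_⟩
    · rw [mkPt_last]; exact abs_le.1 ((hyj i).trans hinv)
    · have h1 : ‖projPrime m (mkPt m (Function.update y i s) (y i))‖ ^ 2 = 1 := by
        rw [norm_projPrime_sq, ← Finset.add_sum_erase _ _ (Finset.mem_univ i)]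
        simp only [mkPt_castSucc, Function.update_self]
        have h2 : ∑ j ∈ Finset.univ.erase i, Function.update y i s j ^ 2
            = ∑ j ∈ Finset.univ.erase i, y j ^ 2 := by
          refine Finset.sum_congr rfl fun j hj => ?_
          rw [Function.update_of_ne (Finset.ne_of_mem_erase hj)]
        rw [Real.sq_sqrt (by linarith), h2]
        ring
      exact (pow_eq_one_iff_of_nonneg (norm_nonneg _) two_ne_zero).1 h1
    · ext j
      by_cases hj : j = i
      · simp [Q, q, hj]
      · simp [Q, q, hj]
  have hpos : 0 < MeasureTheory.volume (Metric.ball (0 : Fin m → ℝ) ((m : ℝ)⁻¹)) :=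
    Metric.measure_ball_pos _ _ (by positivity)
  exact absurd (MeasureTheory.measure_mono_null hsub hQ) hpos.ne'

open scoped Pointwise in
/-- Cylinder integrals of functions of the axial variable. Translation invariance along the axis
makes `axisMeasure m 1` a multiple of Lebesgue measure, and dilations give the dependence on `ρ`. -/
lemma exists_cyl_integral (m : ℕ) (hm : 0 < m) : ∃ c : ℝ, 0 < c ∧ ∀ ρ : ℝ, 0 < ρ →
    ∀ f : ℝ → ℝ, Continuous f →
      ∫ x in {x : EuclideanSpace ℝ (Fin (m + 1)) | ‖projPrime m x‖ = ρ}, f (x (Fin.last m))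
        ∂μH[(m : ℝ)] = ρ ^ m * ρ⁻¹ * c * ∫ t, f t := by
  have : (axisMeasure m 1).IsAddHaarMeasure :=
    MeasureTheory.Measure.isAddHaarMeasure_of_isCompact_nonempty_interior _ (Set.Icc (-1) 1)
      isCompact_Icc (by rw [interior_Icc]; exact ⟨0, by norm_num⟩)
      (axisMeasure_Icc_pos m hm) (axisMeasure_Icc_lt_top m hm).ne
  set c := MeasureTheory.Measure.addHaarScalarFactor (axisMeasure m 1)
    (MeasureTheory.volume : MeasureTheory.Measure ℝ) with hc
  have hc0 : 0 < c := MeasureTheory.Measure.addHaarScalarFactor_pos_of_isAddHaarMeasure _ _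
  have h1 : axisMeasure m 1 = c • MeasureTheory.volume :=
    MeasureTheory.Measure.isAddLeftInvariant_eq_smul _ _
  refine ⟨c, hc0, fun ρ hρ f hf => ?_⟩
  have h2 : axisMeasure m ρ = ENNReal.ofReal (ρ ^ m * ρ⁻¹ * c) • MeasureTheory.volume := by
    ext A hA
    have hset : {x : EuclideanSpace ℝ (Fin (m + 1)) |
        x (Fin.last m) ∈ A ∧ ‖projPrime m x‖ = ρ}
        = ρ • {x : EuclideanSpace ℝ (Fin (m + 1)) |
          x (Fin.last m) ∈ (fun t => ρ * t) ⁻¹' A ∧ ‖projPrime m x‖ = 1} := by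
      ext x
      have : projPrime m (ρ⁻¹ • x) = ρ⁻¹ • projPrime m x := (projL m).map_smul _ _
      rw [Set.mem_smul_set_iff_inv_smul_mem₀ hρ.ne']
      simp only [Set.mem_ofPred_eq, this, norm_smul, Set.mem_preimage, PiLp.smul_apply, smul_eq_mul,
        mul_inv_cancel_left₀ hρ.ne', norm_inv, Real.norm_of_nonneg hρ.le]
      rw [inv_mul_eq_one₀ hρ.ne', eq_comm (a := ρ)]
    rw [axisMeasure_apply m ρ hA, hset, MeasureTheory.Measure.hausdorffMeasure_smul₀
      (Nat.cast_nonneg m) hρ.ne', ← axisMeasure_apply m 1 (measurable_const_mul ρ hA), h1]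
    simp only [MeasureTheory.Measure.smul_apply]
    rw [Real.volume_preimage_mul_left hρ.ne', abs_of_pos (inv_pos.2 hρ),
      ENNReal.ofReal_mul (by positivity), ENNReal.ofReal_mul (by positivity)]
    simp only [ENNReal.smul_def, smul_eq_mul, NNReal.rpow_natCast, ENNReal.ofReal_coe_nnreal]
    have : ((‖ρ‖₊ ^ m : NNReal) : ENNReal) = ENNReal.ofReal (ρ ^ m) := by
      rw [ENNReal.ofReal_pow hρ.le, ENNReal.coe_pow, ← Real.enorm_of_nonneg hρ.le]
      rfl
    rw [this]
    ring
  have h3 := MeasureTheory.integral_map (μ := MeasureTheory.Measure.restrict (μH[(m : ℝ)])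
    {x : EuclideanSpace ℝ (Fin (m + 1)) | ‖projPrime m x‖ = ρ}) (measurable_last m).aemeasurable
    (f := f) hf.aestronglyMeasurable
  rw [← h3]
  change ∫ y, f y ∂(axisMeasure m ρ) = _
  rw [h2, MeasureTheory.integral_smul_measure, ENNReal.toReal_ofReal (by positivity), smul_eq_mul]

/-! ### The profile -/

lemma pdv_one_add (m : ℕ) (i : Fin (m + 1)) (f : EuclideanSpace ℝ (Fin (m + 1)) → ℝ) :
    pdv m i (fun x => 1 + f x) = pdv m i f := by
  funext x
  simp [pdv]

lemma integrable_sepFun (m : ℕ) {φ : ℝ → ℝ} (hφ : ContDiff ℝ (⊤ : ℕ∞) φ)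
    (hs : HasCompactSupport φ) : MeasureTheory.Integrable (sepFun m φ (-(((m : ℝ) + 2) / 2))) := by
  obtain ⟨C, _, hC⟩ := bound_sepFun m hφ hs (s := ((m : ℝ) + 2) / 2) (by positivity) 0
  have h := (integrable_rpow_neg_one_add_norm_sq (E := EuclideanSpace ℝ (Fin (m + 1)))
    (μ := MeasureTheory.volume) (r := (m : ℝ) + 2) (by simp)).const_mul C
  refine h.mono' (contDiff_sepFun m hφ _).continuous.aestronglyMeasurable (.of_forall fun x => ?_)
  have := hC x
  rw [norm_iteratedFDeriv_zero] at this
  rwa [neg_div]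

/-- On `{‖x'‖ = ρ}` the flux density is a function of `xⁿ` alone. -/
lemma flux_density (m : ℕ) {φ : ℝ → ℝ} (hφ : ContDiff ℝ (⊤ : ℕ∞) φ) {ρ : ℝ} (hρ : 0 < ρ)
    {x : EuclideanSpace ℝ (Fin (m + 1))} (hx : ‖projPrime m x‖ = ρ) :
    -(∑ a : Fin m, pdv m a.castSucc (sepFun m φ (-((m - 2) / 2))) x
        * (x a.castSucc / ‖projPrime m x‖))
      = (m - 2) * ρ * (1 + ρ ^ 2) ^ (-((m : ℝ) / 2)) * φ (x (Fin.last m)) := by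
  have e : ∀ a : Fin m, pdv m a.castSucc (sepFun m φ (-((m - 2) / 2))) x
        * (x a.castSucc / ‖projPrime m x‖)
      = (-(m - 2) * sepFun m φ (-((m : ℝ) / 2)) x / ρ) * x a.castSucc ^ 2 := by
    intro a
    rw [pdv_sepFun m hφ, hx, show (-(((m : ℝ) - 2) / 2) - 1) = -((m : ℝ) / 2) by ring]
    ring
  rw [Finset.sum_congr rfl fun a _ => e a, ← Finset.mul_sum, ← norm_projPrime_sq, sepFun, hx]
  field_simp

lemma tendsto_weight (m : ℕ) :
    Tendsto (fun ρ : ℝ => ρ ^ m * (1 + ρ ^ 2) ^ (-((m : ℝ) / 2))) atTop (nhds 1) := by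
  have h1 : Tendsto (fun ρ : ℝ => 1 - (1 + ρ ^ 2)⁻¹) atTop (nhds (1 - 0)) :=
    tendsto_const_nhds.sub (tendsto_inv_atTop_zero.comp
      (tendsto_atTop_add_const_left _ _ (tendsto_pow_atTop two_ne_zero)))
  have h2 := h1.rpow_const (p := (m : ℝ) / 2) (Or.inl (by norm_num))
  rw [sub_zero, Real.one_rpow] at h2
  refine h2.congr' ?_
  filter_upwards [eventually_gt_atTop 0] with ρ hρ
  have e : 1 - (1 + ρ ^ 2)⁻¹ = ρ ^ 2 * (1 + ρ ^ 2)⁻¹ := by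
    have : (1 + ρ ^ 2) ≠ 0 := by positivity
    field_simp
    ring
  rw [e, Real.mul_rpow (by positivity) (by positivity), Real.rpow_neg (by positivity),
    Real.inv_rpow (by positivity), ← Real.rpow_natCast ρ 2, ← Real.rpow_mul hρ.le]
  congr 1
  rw [← Real.rpow_natCast]
  congr 1
  push_cast
  ring

/-- for every `n = m + 1 ≥ 4` there is a nonconstant positive smooth
`S : ℝⁿ → ℝ` with: (1) `Δ'S ≤ 0`, strictly negative somewhere, and integrable;
(2) `S ≡ 1` on `{|xⁿ| ≥ C}` for some `C > 0`; (3) the flux integrals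
`∫_{‖x'‖ = ρ} −⟨∇'S, x'/‖x'‖⟩ dH^{n−1}` converge to a positive limit as `ρ → ∞`;
(4) for every multi-index `I`, `|∂^I(S − 1)(x)| ≤ C_I (1 + ‖x‖)^{3−n}`. -/
theorem exists_ppWave_profile (m : ℕ) (hm : 3 ≤ m) :
    ∃ S : EuclideanSpace ℝ (Fin (m + 1)) → ℝ,
      ContDiff ℝ (⊤ : ℕ∞) S ∧ (∀ x, 0 < S x) ∧ (∃ x y, S x ≠ S y) ∧
      -- (1)
      ((∀ x, lapPrime m S x ≤ 0) ∧ (∃ x₀, lapPrime m S x₀ < 0) ∧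
        MeasureTheory.Integrable (lapPrime m S)) ∧
      -- (2)
      (∃ C : ℝ, 0 < C ∧ ∀ x : EuclideanSpace ℝ (Fin (m + 1)),
        C ≤ |x (Fin.last m)| → S x = 1) ∧
      -- (3)
      (∃ L : ℝ, 0 < L ∧
        Tendsto (fun ρ : ℝ =>
            ∫ x in {x : EuclideanSpace ℝ (Fin (m + 1)) | ‖projPrime m x‖ = ρ},
              -(∑ a : Fin m,
                  pdv m a.castSucc S x * (x a.castSucc / ‖projPrime m x‖))
              ∂μH[(m : ℝ)])
          atTop (nhds L)) ∧
      -- (4)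
      (∀ (k : ℕ) (I : Fin k → Fin (m + 1)), ∃ CI : ℝ,
        ∀ x : EuclideanSpace ℝ (Fin (m + 1)),
          |iteratedFDeriv ℝ k (fun y => S y - 1) x (fun j => coordVec m (I j))|
            ≤ CI * (1 + ‖x‖) ^ ((3 : ℝ) - (m + 1 : ℕ))) := by
  have hm3 : (3 : ℝ) ≤ m := by exact_mod_cast hm
  obtain ⟨φ, hφ, hs, h0, h01, h2, hint⟩ := exists_bump
  obtain ⟨c, hc, hcyl⟩ := exists_cyl_integral m (by omega)
  set h := sepFun m φ (-((m - 2) / 2)) with hh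
  have hnn : ∀ β x, 0 ≤ sepFun m φ β x := fun β x =>
    mul_nonneg (h0 _) (by positivity)
  have hlap : lapPrime m (fun x => 1 + h x)
      = fun x => -(m * (m - 2)) * sepFun m φ (-((m + 2) / 2)) x := by
    funext x
    rw [← lapPrime_sepFun m hφ x]
    simp only [lapPrime, pdv_one_add, hh]
  have hzero : ∀ β, sepFun m φ β 0 = 1 := by
    intro β
    simp [sepFun, h01, norm_projPrime_sq, -norm_eq_zero]
  have hone : ∀ x : EuclideanSpace ℝ (Fin (m + 1)), 2 ≤ |x (Fin.last m)| → h x = 0 := by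
    intro x hx
    simp [hh, sepFun, h2 _ hx]
  have hk : 0 < (m : ℝ) * (m - 2) := by nlinarith
  refine ⟨fun x => 1 + h x, contDiff_const.add (contDiff_sepFun m hφ _),
    fun x => by linarith [hnn (-((m - 2) / 2)) x], ⟨0, mkPt m 0 2, ?_⟩, ⟨?_, ⟨0, ?_⟩, ?_⟩,
    ⟨2, two_pos, fun x hx => by simp [hone x hx]⟩,
    ⟨(m - 2) * c * ∫ t, φ t, mul_pos (mul_pos (by linarith) hc) hint, ?_⟩, ?_⟩
  · have e1 : h 0 = 1 := hzero _
    simp [hone (mkPt m 0 2) (by simp), e1]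
  · intro x
    rw [hlap]
    nlinarith [hnn (-((m + 2) / 2)) x]
  · rw [hlap]
    simp only [hzero]
    linarith
  · rw [hlap]
    exact (integrable_sepFun m hφ hs).const_mul _
  · have hlim := (tendsto_weight m).const_mul ((m - 2) * c * ∫ t, φ t)
    rw [mul_one] at hlim
    refine hlim.congr' ?_
    filter_upwards [eventually_gt_atTop 0] with ρ hρ
    simp only [pdv_one_add]
    rw [MeasureTheory.setIntegral_congr_fun (measurableSet_cyl m ρ)
        (fun x hx => flux_density m hφ hρ hx),
      hcyl ρ hρ (fun t => (m - 2) * ρ * (1 + ρ ^ 2) ^ (-((m : ℝ) / 2)) * φ t)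
        (continuous_const.mul hφ.continuous), MeasureTheory.integral_const_mul]
    field_simp
  · intro k I
    obtain ⟨C, hC0, hC⟩ := bound_sepFun m hφ hs (s := ((m : ℝ) - 2) / 2) (by linarith) k
    refine ⟨C * 2 ^ (((m : ℝ) - 2) / 2), fun x => ?_⟩
    have e : (fun y => (1 + h y) - 1) = h := by funext y; ring
    rw [e]
    have h1 := (iteratedFDeriv ℝ k h x).le_opNorm (fun j => coordVec m (I j))
    have hw := rpow_neg_one_add_norm_sq_le (r := (m : ℝ) - 2) x (by linarith)
    have e2 : (3 : ℝ) - (m + 1 : ℕ) = -((m : ℝ) - 2) := by push_cast; ring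
    simp only [coordVec, PiLp.norm_single, norm_one, Finset.prod_const_one,
      mul_one] at h1
    rw [e2]
    calc _ ≤ ‖iteratedFDeriv ℝ k h x‖ := h1
      _ ≤ C * (1 + ‖x‖ ^ 2) ^ (-((m : ℝ) - 2) / 2) := by rw [neg_div]; exact hC x
      _ ≤ C * (2 ^ (((m : ℝ) - 2) / 2) * (1 + ‖x‖) ^ (-((m : ℝ) - 2))) := by gcongr
      _ = _ := by ring

end
end

section
/- Define the lapse f := (1/2)·S^{−1/2} and the shift vector field X on U by X^n = S⁻¹ and X^a = 0 for a = 1, …, n−1. Then on U: (i) (1/2)·(L_X g)_{ij} = ((2/(n−1))·(tr_g π)·g_{ij} − 2π_{ij})·f for all i, j, where (L_X g)_{ij} := X^k ∂_k g_{ij} + g_{kj}∂_i X^k + g_{ik}∂_j X^k is the Lie derivative of g along X; and (ii) if moreover Δ'S ≤ 0 on U, then 2·f·J^i + |J|_g·X^i = 0 for all i (the J-null-vector equation). (These are the parts of the lemma asserting that (f, X) solves the system (⋆) on pp-wave initial data.) -/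
/-!
Only `S` and constants enter `g`, so the nonzero Christoffel symbols are
`Γⁿₙₙ = S_{,n}/(2S)`, `Γⁿₙₐ = Γⁿₐₙ = S_{,a}/(2S)` and `Γᵃₙₙ = -S_{,a}/2`
(`ppGamma_last_last_last` and its companions). Part (i) is then a componentwise comparison.

For part (ii), the product rule applied to `½ S^{-3/2} S_{,i}` (`ppd_rpow_mul`) gives
`Jᵃ = 0`, by symmetry of the second derivatives of `S` (`ppJ_castSucc`), and
`Jⁿ = ½ S^{-3/2} Δ'S`, where the coefficients of `S^{-5/2} |∇'S|²` add up to
`-3/4 + 1/4 + 1/2 = 0` (`ppJ_last`). So `J` is a multiple of `∂ₙ`, with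
`|J|_g = √S |Jⁿ| = -√S Jⁿ` when `Δ'S ≤ 0`, and `2 f Jⁿ = S^{-1/2} Jⁿ = -|J|_g Xⁿ`.
-/

open scoped BigOperators

noncomputable section

/-- Points of `ℝⁿ` with `n = m + 1`. -/
abbrev PPPt (m : ℕ) := EuclideanSpace ℝ (Fin (m + 1))

/-- The `i`-th coordinate vector. -/
def ppe (m : ℕ) (i : Fin (m + 1)) : PPPt m := EuclideanSpace.single i 1

/-- Partial derivative `∂f/∂xⁱ` at `x`. -/
def ppd (m : ℕ) (i : Fin (m + 1)) (f : PPPt m → ℝ) (x : PPPt m) : ℝ :=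
  fderiv ℝ f x (ppe m i)

/-- The metric `g`: `g_{nn} = S`, `g_{ab} = δ_{ab}`, `g_{na} = 0`. -/
def ppg (m : ℕ) (S : PPPt m → ℝ) (x : PPPt m) (i j : Fin (m + 1)) : ℝ :=
  if i = Fin.last m ∧ j = Fin.last m then S x else if i = j then 1 else 0

/-- The inverse metric: `g^{nn} = S⁻¹`, `g^{ab} = δ^{ab}`, `g^{na} = 0`. -/
def ppginv (m : ℕ) (S : PPPt m → ℝ) (x : PPPt m) (i j : Fin (m + 1)) : ℝ :=
  if i = Fin.last m ∧ j = Fin.last m then (S x)⁻¹ else if i = j then 1 else 0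

/-- Christoffel symbols `Γ^k_{ij} = (1/2)g^{kl}(∂_i g_{jl} + ∂_j g_{il} − ∂_l g_{ij})`. -/
def ppGamma (m : ℕ) (S : PPPt m → ℝ) (x : PPPt m) (k i j : Fin (m + 1)) : ℝ :=
  (1 / 2) * ∑ l, ppginv m S x k l *
    (ppd m i (fun y => ppg m S y j l) x + ppd m j (fun y => ppg m S y i l) x
      - ppd m l (fun y => ppg m S y i j) x)

/-- Scalar curvature
`R_g = g^{jk}(∂_l Γ^l_{jk} − ∂_j Γ^l_{lk} + Γ^l_{lm}Γ^m_{jk} − Γ^l_{jm}Γ^m_{lk})`. -/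
def ppScal (m : ℕ) (S : PPPt m → ℝ) (x : PPPt m) : ℝ :=
  ∑ j, ∑ k, ppginv m S x j k *
    ((∑ l, ppd m l (fun y => ppGamma m S y l j k) x)
      - (∑ l, ppd m j (fun y => ppGamma m S y l l k) x)
      + (∑ l, ∑ m', ppGamma m S x l l m' * ppGamma m S x m' j k)
      - (∑ l, ∑ m', ppGamma m S x l j m' * ppGamma m S x m' l k))

/-- `Δ'S`: the Euclidean Laplacian of `S` in the first `m` of `m + 1` variables. -/
def ppLap (m : ℕ) (S : PPPt m → ℝ) (x : PPPt m) : ℝ :=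
  ∑ a : Fin m, ppd m a.castSucc (ppd m a.castSucc S) x

/-- `|∇'S|²`: the squared Euclidean gradient of `S` in the first `m` variables. -/
def ppGradSq (m : ℕ) (S : PPPt m → ℝ) (x : PPPt m) : ℝ :=
  ∑ a : Fin m, (ppd m a.castSucc S x) ^ 2

/-- The conjugate momentum tensor `π` of the pp-wave initial data:
`π^{nn} = 0`, `π^{na} = π^{an} = (1/2)S^{−3/2}S_{,a}`, `π^{ab} = −(1/2)S^{−3/2}S_{,n}δ^{ab}`. -/
def ppPi (m : ℕ) (S : PPPt m → ℝ) (x : PPPt m) (i j : Fin (m + 1)) : ℝ :=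
  if i = Fin.last m then
    (if j = Fin.last m then 0 else (1 / 2) * S x ^ (-(3 / 2) : ℝ) * ppd m j S x)
  else if j = Fin.last m then (1 / 2) * S x ^ (-(3 / 2) : ℝ) * ppd m i S x
  else if i = j then -(1 / 2) * S x ^ (-(3 / 2) : ℝ) * ppd m (Fin.last m) S x
  else 0

/-- `tr_g π = g_{ij}π^{ij}`. -/
def ppTrPi (m : ℕ) (S : PPPt m → ℝ) (x : PPPt m) : ℝ :=
  ∑ i, ∑ j, ppg m S x i j * ppPi m S x i j

/-- `|π|²_g = g_{ik}g_{jl}π^{ij}π^{kl}`. -/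
def ppPiNormSq (m : ℕ) (S : PPPt m → ℝ) (x : PPPt m) : ℝ :=
  ∑ i, ∑ j, ∑ k, ∑ l,
    ppg m S x i k * ppg m S x j l * ppPi m S x i j * ppPi m S x k l

/-- `π_{ij} = g_{ik}g_{jl}π^{kl}`. -/
def ppPiLow (m : ℕ) (S : PPPt m → ℝ) (x : PPPt m) (i j : Fin (m + 1)) : ℝ :=
  ∑ k, ∑ l, ppg m S x i k * ppg m S x j l * ppPi m S x k l

/-- Energy density `μ = (1/2)(R_g + (tr_g π)²/(n−1) − |π|²_g)`, `n − 1 = m`. -/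
def ppMu (m : ℕ) (S : PPPt m → ℝ) (x : PPPt m) : ℝ :=
  (1 / 2) * (ppScal m S x + (ppTrPi m S x) ^ 2 / (m : ℝ) - ppPiNormSq m S x)

/-- Current density `J^j = ∂_i π^{ij} + Γ^i_{li}π^{lj} + Γ^j_{li}π^{li}`. -/
def ppJ (m : ℕ) (S : PPPt m → ℝ) (x : PPPt m) (j : Fin (m + 1)) : ℝ :=
  (∑ i, ppd m i (fun y => ppPi m S y i j) x)
    + (∑ l, ∑ i, ppGamma m S x i l i * ppPi m S x l j)
    + (∑ l, ∑ i, ppGamma m S x j l i * ppPi m S x l i)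

/-- `|J|_g = √(g_{ij}J^iJ^j)`. -/
def ppJnorm (m : ℕ) (S : PPPt m → ℝ) (x : PPPt m) : ℝ :=
  Real.sqrt (∑ i, ∑ j, ppg m S x i j * ppJ m S x i * ppJ m S x j)

/-- The shift vector field `X`: `X^n = S⁻¹`, `X^a = 0`. -/
def ppX (m : ℕ) (S : PPPt m → ℝ) (x : PPPt m) (i : Fin (m + 1)) : ℝ :=
  if i = Fin.last m then (S x)⁻¹ else 0

/-- The lapse function `f = (1/2)S^{−1/2}`. -/
def ppf (m : ℕ) (S : PPPt m → ℝ) (x : PPPt m) : ℝ :=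
  (1 / 2) * S x ^ (-(1 / 2) : ℝ)

/-- Lie derivative `(L_X g)_{ij} = X^k ∂_k g_{ij} + g_{kj}∂_i X^k + g_{ik}∂_j X^k`. -/
def ppLXg (m : ℕ) (S : PPPt m → ℝ) (x : PPPt m) (i j : Fin (m + 1)) : ℝ :=
  (∑ k, ppX m S x k * ppd m k (fun y => ppg m S y i j) x)
    + (∑ k, ppg m S x k j * ppd m i (fun y => ppX m S y k) x)
    + (∑ k, ppg m S x i k * ppd m j (fun y => ppX m S y k) x)

/-! ### Partial derivatives -/

theorem ppd_const (m : ℕ) (i : Fin (m + 1)) (c : ℝ) (x : PPPt m) :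
    ppd m i (fun _ => c) x = 0 := by
  simp [ppd]

theorem ppd_ite (m : ℕ) (i : Fin (m + 1)) (p : Prop) [Decidable p] (F : PPPt m → ℝ)
    (x : PPPt m) :
    ppd m i (fun y => if p then F y else 0) x = if p then ppd m i F x else 0 := by
  split_ifs
  · rfl
  · exact ppd_const m i 0 x

theorem ppd_inv (m : ℕ) (i : Fin (m + 1)) (S : PPPt m → ℝ) (x : PPPt m)
    (hd : DifferentiableAt ℝ S x) (hx : 0 < S x) :
    ppd m i (fun y => (S y)⁻¹) x = -(ppd m i S x) / S x ^ 2 := by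
  have h := (hasDerivAt_inv hx.ne').comp_hasFDerivAt x hd.hasFDerivAt
  have h2 : fderiv ℝ (fun y => (S y)⁻¹) x = _ := h.fderiv
  rw [ppd, h2]
  simp [ppd]
  ring

/-- Product rule for the factor `S^{-3/2} F` occurring in the components of `π`. -/
theorem ppd_rpow_mul (m : ℕ) (i : Fin (m + 1)) (c : ℝ) (S F : PPPt m → ℝ) (x : PPPt m)
    (hd : DifferentiableAt ℝ S x) (hF : DifferentiableAt ℝ F x) (hx : 0 < S x) :
    ppd m i (fun y => c * S y ^ (-(3 / 2) : ℝ) * F y) x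
      = c * S x ^ (-(3 / 2) : ℝ) *
        (ppd m i F x - 3 / 2 * ppd m i S x * F x / S x) := by
  have h := ((hd.hasFDerivAt.rpow_const (p := (-(3 / 2) : ℝ)) (Or.inl hx.ne')).const_mul c).mul
    hF.hasFDerivAt
  have h2 : fderiv ℝ (fun y => c * S y ^ (-(3 / 2) : ℝ) * F y) x = _ := h.fderiv
  have h3 : S x ^ (-(3 / 2) - 1 : ℝ) = S x ^ (-(3 / 2) : ℝ) / S x := by
    rw [Real.rpow_sub hx, Real.rpow_one]
  rw [ppd, h2]
  simp only [ppd, h3, add_apply, smul_apply, smul_eq_mul]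
  field_simp
  ring

/-! ### Components of the metric, the Christoffel symbols and the momentum tensor -/

section components

variable (m : ℕ) (S : PPPt m → ℝ) (x : PPPt m) (a b c : Fin m)

@[simp] theorem ppg_ll : ppg m S x (Fin.last m) (Fin.last m) = S x := by simp [ppg]
@[simp] theorem ppg_lc : ppg m S x (Fin.last m) a.castSucc = 0 := by
  simp [ppg, (Fin.castSucc_ne_last a).symm]
@[simp] theorem ppg_cl : ppg m S x a.castSucc (Fin.last m) = 0 := by simp [ppg]
@[simp] theorem ppg_cc : ppg m S x a.castSucc b.castSucc = if a = b then 1 else 0 := by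
  simp [ppg]

@[simp] theorem ppginv_ll : ppginv m S x (Fin.last m) (Fin.last m) = (S x)⁻¹ := by
  simp [ppginv]
@[simp] theorem ppginv_lc : ppginv m S x (Fin.last m) a.castSucc = 0 := by
  simp [ppginv, (Fin.castSucc_ne_last a).symm]
@[simp] theorem ppginv_cl : ppginv m S x a.castSucc (Fin.last m) = 0 := by simp [ppginv]
@[simp] theorem ppginv_cc :
    ppginv m S x a.castSucc b.castSucc = if a = b then 1 else 0 := by
  simp [ppginv]

@[simp] theorem ppX_l : ppX m S x (Fin.last m) = (S x)⁻¹ := by simp [ppX]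
@[simp] theorem ppX_c : ppX m S x a.castSucc = 0 := by simp [ppX]

@[simp] theorem ppPi_ll : ppPi m S x (Fin.last m) (Fin.last m) = 0 := by simp [ppPi]
@[simp] theorem ppPi_lc : ppPi m S x (Fin.last m) a.castSucc
    = (1 / 2) * S x ^ (-(3 / 2) : ℝ) * ppd m a.castSucc S x := by simp [ppPi]
@[simp] theorem ppPi_cl : ppPi m S x a.castSucc (Fin.last m)
    = (1 / 2) * S x ^ (-(3 / 2) : ℝ) * ppd m a.castSucc S x := by simp [ppPi]
@[simp] theorem ppPi_cc : ppPi m S x a.castSucc b.castSucc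
    = if a = b then -(1 / 2) * S x ^ (-(3 / 2) : ℝ) * ppd m (Fin.last m) S x else 0 := by
  simp [ppPi]

@[simp] theorem ppGamma_last_last_last :
    ppGamma m S x (Fin.last m) (Fin.last m) (Fin.last m)
      = ppd m (Fin.last m) S x / (2 * S x) := by
  simp [ppGamma, Fin.sum_univ_castSucc]
  ring
@[simp] theorem ppGamma_last_last_castSucc :
    ppGamma m S x (Fin.last m) (Fin.last m) a.castSucc = ppd m a.castSucc S x / (2 * S x) := by
  simp [ppGamma, Fin.sum_univ_castSucc, ppd_const]
  ring
@[simp] theorem ppGamma_last_castSucc_last :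
    ppGamma m S x (Fin.last m) a.castSucc (Fin.last m) = ppd m a.castSucc S x / (2 * S x) := by
  simp [ppGamma, Fin.sum_univ_castSucc, ppd_const]
  ring
@[simp] theorem ppGamma_last_castSucc_castSucc :
    ppGamma m S x (Fin.last m) a.castSucc b.castSucc = 0 := by
  simp [ppGamma, Fin.sum_univ_castSucc, ppd_const]
@[simp] theorem ppGamma_castSucc_last_last :
    ppGamma m S x a.castSucc (Fin.last m) (Fin.last m) = -(ppd m a.castSucc S x) / 2 := by
  simp [ppGamma, Fin.sum_univ_castSucc, ppd_const]
  ring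
@[simp] theorem ppGamma_castSucc_last_castSucc :
    ppGamma m S x a.castSucc (Fin.last m) b.castSucc = 0 := by
  simp [ppGamma, Fin.sum_univ_castSucc, ppd_const]
@[simp] theorem ppGamma_castSucc_castSucc_last :
    ppGamma m S x a.castSucc b.castSucc (Fin.last m) = 0 := by
  simp [ppGamma, Fin.sum_univ_castSucc, ppd_const]
@[simp] theorem ppGamma_castSucc_castSucc_castSucc :
    ppGamma m S x a.castSucc b.castSucc c.castSucc = 0 := by
  simp [ppGamma, Fin.sum_univ_castSucc, ppd_const]

theorem ppTrPi_eq : ppTrPi m S x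
    = -(m / 2) * S x ^ (-(3 / 2) : ℝ) * ppd m (Fin.last m) S x := by
  simp [ppTrPi, Fin.sum_univ_castSucc]
  ring

end components

/-! ### The current density -/

/-- Symmetry of the second partial derivatives of a smooth function. -/
theorem ppd_comm (m : ℕ) (i j : Fin (m + 1)) (S : PPPt m → ℝ) (x : PPPt m)
    (hS : ContDiffAt ℝ (⊤ : ℕ∞) S x) :
    ppd m i (ppd m j S) x = ppd m j (ppd m i S) x := by
  have hd : DifferentiableAt ℝ (fderiv ℝ S) x :=
    (hS.fderiv_right (m := 1) (by norm_cast)).differentiableAt (by norm_num)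
  have key : ∀ p q : Fin (m + 1),
      ppd m p (ppd m q S) x = fderiv ℝ (fderiv ℝ S) x (ppe m p) (ppe m q) := by
    intro p q
    have h := hd.hasFDerivAt.clm_apply (hasFDerivAt_const (ppe m q) x)
    have h2 : fderiv ℝ (ppd m q S) x = _ := h.fderiv
    rw [ppd, h2]
    simp
  rw [key, key]
  exact (hS.isSymmSndFDerivAt (by simp; exact WithTop.coe_le_coe.2 (le_top : (2 : ℕ∞) ≤ ⊤))) _ _

theorem differentiableAt_ppd (m : ℕ) (j : Fin (m + 1)) (S : PPPt m → ℝ) (x : PPPt m)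
    (hS : ContDiffAt ℝ (⊤ : ℕ∞) S x) : DifferentiableAt ℝ (ppd m j S) x := by
  have hd : DifferentiableAt ℝ (fderiv ℝ S) x :=
    (hS.fderiv_right (m := 1) (by norm_cast)).differentiableAt (by norm_num)
  exact hd.clm_apply (differentiableAt_const _)

theorem ppJ_castSucc (m : ℕ) (a : Fin m) (S : PPPt m → ℝ) (x : PPPt m)
    (hS : ContDiffAt ℝ (⊤ : ℕ∞) S x) (hx : 0 < S x) : ppJ m S x a.castSucc = 0 := by
  have hd : DifferentiableAt ℝ S x := hS.differentiableAt (by simp)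
  have hdd := fun j => differentiableAt_ppd m j S x hS
  simp only [ppJ, Fin.sum_univ_castSucc, ppPi_ll, ppPi_lc, ppPi_cl, ppPi_cc, ppd_ite,
    ppd_rpow_mul m _ _ S _ x hd (hdd _) hx]
  simp
  rw [ppd_comm m (Fin.last m) a.castSucc S x hS]
  field_simp
  ring

theorem ppJ_last (m : ℕ) (S : PPPt m → ℝ) (x : PPPt m)
    (hS : ContDiffAt ℝ (⊤ : ℕ∞) S x) (hx : 0 < S x) :
    ppJ m S x (Fin.last m) = (1 / 2) * S x ^ (-(3 / 2) : ℝ) * ppLap m S x := by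
  have hd : DifferentiableAt ℝ S x := hS.differentiableAt (by simp)
  have hdd := fun j => differentiableAt_ppd m j S x hS
  simp only [ppJ, Fin.sum_univ_castSucc, ppPi_ll, ppPi_lc, ppPi_cl, ppPi_cc, ppd_const,
    ppd_rpow_mul m _ _ S _ x hd (hdd _) hx]
  simp
  rw [ppLap, Finset.mul_sum, ← Finset.sum_add_distrib, ← add_assoc, ← Finset.sum_add_distrib,
    ← Finset.sum_add_distrib]
  refine Finset.sum_congr rfl fun a _ => ?_
  field_simp
  ring

/-- Expresses the power of `S` in `π` through the one in the lapse `f`, so that part (i) becomes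
an identity of rational functions of `S`, its derivatives and `S^{-1/2}`. -/
theorem rpow_neg_three_halves {s : ℝ} (hs : 0 < s) :
    s ^ (-(3 / 2) : ℝ) = s ^ (-(1 / 2) : ℝ) / s := by
  rw [show (-(3 / 2) : ℝ) = -(1 / 2) - 1 by norm_num, Real.rpow_sub hs, Real.rpow_one]

theorem rpow_neg_half_sq {s : ℝ} (hs : 0 < s) :
    (s ^ (-(1 / 2) : ℝ)) ^ 2 = s⁻¹ := by
  rw [← Real.rpow_natCast, ← Real.rpow_mul hs.le, ← Real.rpow_neg_one]
  norm_num

/-- with lapse `f = (1/2)S^{−1/2}` and shift `X = S⁻¹ ∂/∂xⁿ`, the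
pp-wave initial data satisfies (i) `(1/2)(L_X g)_{ij} = ((2/(n−1))(tr_g π)g_{ij} −
2π_{ij})f` on `U`, and (ii) if `Δ'S ≤ 0` on `U` then the `J`-null-vector equation
`2fJ + |J|_g X = 0` holds on `U`. -/
theorem ppWave_lapse_shift_solves_system (m : ℕ) (hm : 1 ≤ m)
    (U : Set (PPPt m)) (hU : IsOpen U)
    (S : PPPt m → ℝ) (hS : ContDiffOn ℝ (⊤ : ℕ∞) S U) (hpos : ∀ x ∈ U, 0 < S x) :
    (∀ x ∈ U, ∀ i j : Fin (m + 1),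
        (1 / 2) * ppLXg m S x i j
          = ((2 / (m : ℝ)) * ppTrPi m S x * ppg m S x i j
              - 2 * ppPiLow m S x i j) * ppf m S x) ∧
      ((∀ x ∈ U, ppLap m S x ≤ 0) →
        ∀ x ∈ U, ∀ i : Fin (m + 1),
          2 * ppf m S x * ppJ m S x i + ppJnorm m S x * ppX m S x i = 0) := by
  have hC : ∀ x ∈ U, ContDiffAt ℝ (⊤ : ℕ∞) S x := fun x hx => hS.contDiffAt (hU.mem_nhds hx)
  have hm0 : (m : ℝ) ≠ 0 := by positivity
  refine ⟨fun x hx i j => ?_, fun hLap x hx i => ?_⟩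
  · have hx0 := hpos x hx
    have hd : DifferentiableAt ℝ S x := (hC x hx).differentiableAt (by simp)
    have hinv := fun i => ppd_inv m i S x hd hx0
    have heta : ∀ i, ppd m i (fun y => S y) x = ppd m i S x := fun _ => rfl
    have hsq : S x * (S x ^ (-(1 / 2) : ℝ)) ^ 2 = 1 := by
      rw [rpow_neg_half_sq hx0, mul_inv_cancel₀ hx0.ne']
    rw [ppTrPi_eq, rpow_neg_three_halves hx0, ppf]
    induction i using Fin.lastCases <;> induction j using Fin.lastCases <;>
      simp only [ppLXg, ppPiLow, Fin.sum_univ_castSucc, ppg_ll, ppg_lc, ppg_cl, ppg_cc,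
        ppX_l, ppX_c, ppPi_ll, ppPi_lc, ppPi_cl, ppPi_cc, hinv, heta, ppd_const,
        rpow_neg_three_halves hx0] <;>
      generalize S x ^ (-(1 / 2) : ℝ) = r at hsq ⊢ <;>
      simp
    · field_simp
      linear_combination ppd m (Fin.last m) S x * hsq
    · field_simp
      linear_combination ppd m (Fin.castSucc _) S x * hsq
    · field_simp
      linear_combination ppd m (Fin.castSucc _) S x * hsq
    · left
      split_ifs
      · field_simp
        ring
      · ring
  · have hx0 := hpos x hx
    induction i using Fin.lastCases with
    | cast a => simp [ppJ_castSucc m a S x (hC x hx) hx0]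
    | last =>
      have hJ := ppJ_last m S x (hC x hx) hx0
      have hJ0 : ppJ m S x (Fin.last m) ≤ 0 := by
        rw [hJ]
        exact mul_nonpos_of_nonneg_of_nonpos (by positivity) (hLap x hx)
      have hn : ppJnorm m S x = √(S x) * -ppJ m S x (Fin.last m) := by
        rw [ppJnorm, ← abs_of_nonpos hJ0, ← Real.sqrt_sq_eq_abs, ← Real.sqrt_mul hx0.le]
        congr 1
        simp [Fin.sum_univ_castSucc, fun a => ppJ_castSucc m a S x (hC x hx) hx0]
        ring
      have hr : S x ^ (-(1 / 2) : ℝ) = √(S x) / S x := by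
        rw [Real.sqrt_eq_rpow, show (-(1 / 2) : ℝ) = 1 / 2 - 1 by norm_num,
          Real.rpow_sub hx0, Real.rpow_one]
      rw [hn, ppf, hr, ppX_l]
      field_simp
      ring

end
end
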